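/- arXiv:2502.04146 — 2 statements merged into one kernel-verified Lean document; each statement's English description precedes it below -/
import Mathlib

section
/- Let (U, φ) be a finite standard closure space, let C be a closed set, x ∈ C, and set Q = C \ {y ∈ C : x ∈ φ^b({y})}. Then Q is a quasi-closed set spanning C if and only if C = φ(A) for some E-generator A of x. -/
/-!
As proper `φ^b`-refinement is well-founded, every set `X` with `x ∈ φ X` and `x ∉ φ^b X` can be
refined to a D-generator of `x`, whose closure is contained in `φ X`, so these sets have the same
minimal closures as the D-generators. Thus `C` is the closure of an E-generator of `x` iff it is a
minimal closure of such an `X`. The candidates `X` contained in `C` are the subsets of `Q` with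
`x ∈ φ X`. Minimality of `C` says that any `X ⊆ Q` spanning less than `C` does not have `x` in its
closure, and `x ∉ φ X` puts `φ X` inside `Q`: this is quasi-closedness of `Q`.
-/

namespace EBaseFormal

open Set

variable {α : Type*}

/-- `φ` is a closure operator on subsets of `α`. -/
def IsClosureOp (φ : Set α → Set α) : Prop :=
  (∀ X, X ⊆ φ X) ∧ (∀ X, φ (φ X) = φ X) ∧ ∀ X Y : Set α, X ⊆ Y → φ X ⊆ φ Y

/-- `C` is a closed set of the closure space. -/
def IsClosedSet (φ : Set α → Set α) (C : Set α) : Prop :=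
  φ C = C

/-- The closure space is standard: `φ {x} \ {x}` is closed for every `x`. -/
def IsStandard (φ : Set α → Set α) : Prop :=
  ∀ x : α, IsClosedSet φ (φ {x} \ {x})

/-- The binary part `φ^b` of the closure operator. -/
def binPart (φ : Set α → Set α) (X : Set α) : Set α :=
  ⋃ x ∈ X, φ {x}

/-- `A` is a D-generator of `x`. -/
def IsDGen (φ : Set α → Set α) (x : α) (A : Set α) : Prop :=
  x ∈ φ A ∧ x ∉ binPart φ A ∧ ∀ B : Set α, binPart φ B ⊂ binPart φ A → x ∉ φ B

/-- `A` is an E-generator of `x`: a D-generator whose closure is inclusion-minimal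
among the closures of D-generators of `x`. -/
def IsEGen (φ : Set α → Set α) (x : α) (A : Set α) : Prop :=
  IsDGen φ x A ∧ ∀ B : Set α, IsDGen φ x B → φ B ⊆ φ A → φ B = φ A

/-- The E-base of the closure space: all valid nontrivial binary implications
together with the implications `A → {x}` for `A` an E-generator of `x`. -/
def EBase (φ : Set α → Set α) : Set (Set α × Set α) :=
  {p | ∃ a x : α, p = ({a}, {x}) ∧ x ∈ φ {a} ∧ x ≠ a} ∪
    {p | ∃ (x : α) (A : Set α), p = (A, {x}) ∧ IsEGen φ x A}

/-- `Y` satisfies all implications of `S`. -/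
def ImpClosedSet (S : Set (Set α × Set α)) (Y : Set α) : Prop :=
  ∀ p ∈ S, p.1 ⊆ Y → p.2 ⊆ Y

/-- The closure of `Z` under the implications in `S`: the smallest set containing
`Z` satisfying all implications of `S`. -/
def ImpClosure (S : Set (Set α × Set α)) (Z : Set α) : Set α :=
  ⋂₀ {Y : Set α | Z ⊆ Y ∧ ImpClosedSet S Y}

/-- The E-base is valid: its induced closure operator is `φ`. -/
def EBaseValid (φ : Set α → Set α) : Prop :=
  ∀ Z : Set α, ImpClosure (EBase φ) Z = φ Z

/-- `Q` is quasi-closed. -/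
def QuasiClosed (φ : Set α → Set α) (Q : Set α) : Prop :=
  ∀ X ⊆ Q, φ X ⊂ φ Q → φ X ⊆ Q

/-- `P` is pseudo-closed: non-closed and inclusion-minimal among the quasi-closed
sets spanning `φ P`. -/
def PseudoClosed (φ : Set α → Set α) (P : Set α) : Prop :=
  ¬ IsClosedSet φ P ∧ QuasiClosed φ P ∧
    ∀ Q : Set α, QuasiClosed φ Q → φ Q = φ P → Q ⊆ P → Q = P

/-- `C` is an essential closed set. -/
def Essential (φ : Set α → Set α) (C : Set α) : Prop :=
  IsClosedSet φ C ∧ ∃ P : Set α, PseudoClosed φ P ∧ φ P = C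

/-- The canonical (Duquenne–Guigues) base. -/
def DGBase (φ : Set α → Set α) : Set (Set α × Set α) :=
  {p | ∃ P : Set α, PseudoClosed φ P ∧ p = (P, φ P \ P)}

/-- `C'` is a predecessor (lower cover) of `C` in the closure lattice. -/
def Predecessor (φ : Set α → Set α) (C' C : Set α) : Prop :=
  IsClosedSet φ C' ∧ IsClosedSet φ C ∧ C' ⊂ C ∧
    ∀ C'' : Set α, IsClosedSet φ C'' → C' ⊂ C'' → C'' ⊆ C → C'' = C

/-- The closure lattice is join-semidistributive. -/
def JoinSemidistrib (φ : Set α → Set α) : Prop :=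
  ∀ C1 C2 C3 : Set α, IsClosedSet φ C1 → IsClosedSet φ C2 → IsClosedSet φ C3 →
    φ (C1 ∪ C2) = φ (C1 ∪ C3) → φ (C1 ∪ C2) = φ (C1 ∪ C2 ∩ C3)

/-- The closure lattice is meet-semidistributive. -/
def MeetSemidistrib (φ : Set α → Set α) : Prop :=
  ∀ C1 C2 C3 : Set α, IsClosedSet φ C1 → IsClosedSet φ C2 → IsClosedSet φ C3 →
    C1 ∩ C2 = C1 ∩ C3 → C1 ∩ C2 = C1 ∩ φ (C2 ∪ C3)

/-- The closure lattice is semidistributive. -/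
def Semidistrib (φ : Set α → Set α) : Prop :=
  JoinSemidistrib φ ∧ MeetSemidistrib φ

/-- The closure lattice is modular: `a ≤ b → (b ∧ c) ∨ a = b ∧ (c ∨ a)`. -/
def ModularLattice (φ : Set α → Set α) : Prop :=
  ∀ A B C : Set α, IsClosedSet φ A → IsClosedSet φ B → IsClosedSet φ C →
    A ⊆ B → φ (B ∩ C ∪ A) = B ∩ φ (C ∪ A)

/-- The closure lattice is atomistic (in a standard space). -/
def Atomistic (φ : Set α → Set α) : Prop :=
  ∀ x : α, φ {x} = ({x} : Set α)

/-- The closure lattice is upper-semimodular. -/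
def UpperSemimodular (φ : Set α → Set α) : Prop :=
  ∀ C1 C2 : Set α, IsClosedSet φ C1 → IsClosedSet φ C2 →
    Predecessor φ (C1 ∩ C2) C1 → Predecessor φ C2 (φ (C1 ∪ C2))

/-- The closure lattice is geometric: atomistic and upper-semimodular. -/
def Geometric (φ : Set α → Set α) : Prop :=
  Atomistic φ ∧ UpperSemimodular φ

/-- `x` is prime in the lattice `(↓C, ⊆)` of closed subsets of `C`. -/
def PrimeIn (φ : Set α → Set α) (C : Set α) (x : α) : Prop :=
  ∀ C1 C2 : Set α, IsClosedSet φ C1 → IsClosedSet φ C2 → C1 ⊆ C → C2 ⊆ C →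
    φ {x} ⊆ φ (C1 ∪ C2) → φ {x} ⊆ C1 ∨ φ {x} ⊆ C2

/-- `x ∈ C` is almost prime in `(↓C, ⊆)`. -/
def AlmostPrimeIn (φ : Set α → Set α) (C : Set α) (x : α) : Prop :=
  x ∈ C ∧ ¬ PrimeIn φ C x ∧
    ∀ C' : Set α, Predecessor φ C' C → x ∈ C' → PrimeIn φ C' x

/-- `A` is a `φ^b`-minimal spanning set of the closed set `C`. -/
def BMinSpanning (φ : Set α → Set α) (C A : Set α) : Prop :=
  φ A = C ∧ ∀ B : Set α, binPart φ B ⊂ binPart φ A → φ B ≠ C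

/-- `C` is join-irreducible: nonempty and whenever it is a join of two closed sets
it equals one of them. -/
def JoinIrred (φ : Set α → Set α) (C : Set α) : Prop :=
  IsClosedSet φ C ∧ C ≠ ∅ ∧
    ∀ C1 C2 : Set α, IsClosedSet φ C1 → IsClosedSet φ C2 →
      C = φ (C1 ∪ C2) → C = C1 ∨ C = C2

/-- `C` is join-irreducible: nonempty with a unique predecessor. -/
def JoinIrredUP (φ : Set α → Set α) (C : Set α) : Prop :=
  IsClosedSet φ C ∧ C ≠ ∅ ∧ ∃! C' : Set α, Predecessor φ C' C

section Closure

variable {φ : Set α → Set α} {X Y : Set α}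

namespace IsClosureOp

theorem subset_closure (hφ : IsClosureOp φ) : X ⊆ φ X :=
  hφ.1 X

theorem closure_mono (hφ : IsClosureOp φ) (h : X ⊆ Y) : φ X ⊆ φ Y :=
  hφ.2.2 X Y h

theorem isClosedSet_closure (hφ : IsClosureOp φ) (X : Set α) : IsClosedSet φ (φ X) :=
  hφ.2.1 X

theorem closure_subset_iff (hφ : IsClosureOp φ) (hY : IsClosedSet φ Y) : φ X ⊆ Y ↔ X ⊆ Y :=
  ⟨hφ.subset_closure.trans, fun h => (hφ.closure_mono h).trans_eq hY⟩

theorem subset_binPart (hφ : IsClosureOp φ) : X ⊆ binPart φ X :=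
  fun _ hy => mem_biUnion hy (hφ.subset_closure rfl)

theorem binPart_subset_closure (hφ : IsClosureOp φ) : binPart φ X ⊆ φ X :=
  iUnion₂_subset fun _ hy => hφ.closure_mono (singleton_subset_iff.2 hy)

theorem closure_subset_of_binPart_subset (hφ : IsClosureOp φ)
    (h : binPart φ X ⊆ binPart φ Y) : φ X ⊆ φ Y :=
  (hφ.closure_subset_iff (hφ.isClosedSet_closure Y)).2 <|
    hφ.subset_binPart.trans <| h.trans hφ.binPart_subset_closure

end IsClosureOp

end Closure

section Generators

variable {φ : Set α → Set α} {C X : Set α} {x : α}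

/-- `B` is a proper `φ^b`-refinement of `A`, the relation minimized by D-generators. -/
def IsProperRefinement (φ : Set α → Set α) (B A : Set α) : Prop :=
  binPart φ B ⊂ binPart φ A

/-- The nonbinary generators of `x`: the sets whose closure contains `x` while their binary part
does not. The D-generators of `x` are those that admit no proper `φ^b`-refinement of this kind. -/
def nonbinaryGens (φ : Set α → Set α) (x : α) : Set (Set α) :=
  {X | x ∈ φ X \ binPart φ X}

/-- The set `Q` of the theorem: the elements of `C` that do not generate `x` on their own. It is the
largest subset of `C` whose binary part misses `x`. -/
def binAvoiding (φ : Set α → Set α) (x : α) (C : Set α) : Set α :=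
  C \ {y | x ∈ binPart φ {y}}

theorem IsDGen.mem_nonbinaryGens (hX : IsDGen φ x X) : X ∈ nonbinaryGens φ x :=
  ⟨hX.1, hX.2.1⟩

theorem subset_binAvoiding_iff : X ⊆ binAvoiding φ x C ↔ X ⊆ C ∧ x ∉ binPart φ X := by
  simp only [binAvoiding, binPart, subset_def, mem_sdiff, mem_ofPred_eq, mem_iUnion₂,
    mem_singleton_iff, exists_prop, exists_eq_left]
  grind

theorem closure_subset_binAvoiding_iff (hφ : IsClosureOp φ) :
    φ X ⊆ binAvoiding φ x C ↔ φ X ⊆ C ∧ x ∉ φ X := by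
  have binPart_closure : binPart φ (φ X) = φ X :=
    (hφ.binPart_subset_closure.trans_eq (hφ.isClosedSet_closure X)).antisymm hφ.subset_binPart
  rw [subset_binAvoiding_iff, binPart_closure]

theorem exists_isDGen_binPart_subset (hwf : WellFounded (IsProperRefinement φ))
    (hX : X ∈ nonbinaryGens φ x) : ∃ A, IsDGen φ x A ∧ binPart φ A ⊆ binPart φ X := by
  obtain ⟨A, ⟨hxA, hAX⟩, hmin⟩ :=
    hwf.has_min {A | x ∈ φ A ∧ binPart φ A ⊆ binPart φ X} ⟨X, hX.1, Subset.rfl⟩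
  exact ⟨A, ⟨hxA, fun h => hX.2 (hAX h), fun B hBA hxB =>
    hmin B ⟨hxB, hBA.subset.trans hAX⟩ hBA⟩, hAX⟩

theorem exists_isDGen_closure_subset (hφ : IsClosureOp φ)
    (hwf : WellFounded (IsProperRefinement φ)) (hX : X ∈ nonbinaryGens φ x) :
    ∃ A, IsDGen φ x A ∧ φ A ⊆ φ X :=
  (exists_isDGen_binPart_subset hwf hX).imp fun _ =>
    And.imp_right hφ.closure_subset_of_binPart_subset

theorem exists_isEGen_closure_eq_iff_minimal (hφ : IsClosureOp φ)
    (hwf : WellFounded (IsProperRefinement φ)) :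
    (∃ A, IsEGen φ x A ∧ φ A = C) ↔ Minimal (· ∈ φ '' nonbinaryGens φ x) C := by
  constructor
  · rintro ⟨A, ⟨hA, hmin⟩, rfl⟩
    refine ⟨mem_image_of_mem φ hA.mem_nonbinaryGens, ?_⟩
    rintro _ ⟨X, hX, rfl⟩ hXA
    obtain ⟨B, hB, hBX⟩ := exists_isDGen_closure_subset hφ hwf hX
    exact (hmin B hB (hBX.trans hXA)).superset.trans hBX
  · rintro ⟨⟨X, hX, rfl⟩, hmin⟩
    have closure_eq_of_isDGen : ∀ B, IsDGen φ x B → φ B ⊆ φ X → φ B = φ X := fun B hB hBX =>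
      hBX.antisymm (hmin (mem_image_of_mem φ hB.mem_nonbinaryGens) hBX)
    obtain ⟨A, hA, hAX⟩ := exists_isDGen_closure_subset hφ hwf hX
    have hAX_eq : φ A = φ X := closure_eq_of_isDGen A hA hAX
    refine ⟨A, ⟨hA, ?_⟩, hAX_eq⟩
    simpa only [hAX_eq] using closure_eq_of_isDGen

theorem quasiClosed_binAvoiding_and_spanning_iff_minimal (hφ : IsClosureOp φ) (hx : x ∈ C) :
    (QuasiClosed φ (binAvoiding φ x C) ∧ φ (binAvoiding φ x C) = C) ↔
      Minimal (· ∈ φ '' nonbinaryGens φ x) C := by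
  set Q := binAvoiding φ x C
  constructor
  · rintro ⟨hqc, hspan⟩
    have hQ_gen : Q ∈ nonbinaryGens φ x :=
      ⟨hspan.symm ▸ hx, (subset_binAvoiding_iff.1 Subset.rfl).2⟩
    refine ⟨⟨Q, hQ_gen, hspan⟩, ?_⟩
    rintro _ ⟨X, ⟨hxX, hxb⟩, rfl⟩ hXC
    have hXQ : X ⊆ Q := subset_binAvoiding_iff.2 ⟨hφ.subset_closure.trans hXC, hxb⟩
    by_contra hCX
    have hφXQ : φ X ⊆ Q := hqc X hXQ (hspan.symm ▸ ⟨hXC, hCX⟩)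
    exact ((closure_subset_binAvoiding_iff hφ).1 hφXQ).2 hxX
  · rintro ⟨⟨A, hA, rfl⟩, hmin⟩
    have hAQ : A ⊆ Q := subset_binAvoiding_iff.2 ⟨hφ.subset_closure, hA.2⟩
    have hspan : φ Q = φ A :=
      ((hφ.closure_subset_iff (hφ.isClosedSet_closure A)).2 sdiff_subset).antisymm
        (hφ.closure_mono hAQ)
    refine ⟨fun X hXQ hlt => ?_, hspan⟩
    rw [hspan] at hlt
    have hxX : x ∉ φ X := fun hxX =>
      hlt.not_subset (hmin ⟨X, ⟨hxX, (subset_binAvoiding_iff.1 hXQ).2⟩, rfl⟩ hlt.subset)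
    exact (closure_subset_binAvoiding_iff hφ).2 ⟨hlt.subset, hxX⟩

theorem statement7_general (hφ : IsClosureOp φ)
    (hwf : WellFounded (IsProperRefinement φ)) (hx : x ∈ C) :
    (QuasiClosed φ (C \ {y : α | x ∈ binPart φ {y}}) ∧
        φ (C \ {y : α | x ∈ binPart φ {y}}) = C) ↔
      ∃ A : Set α, IsEGen φ x A ∧ φ A = C :=
  (quasiClosed_binAvoiding_and_spanning_iff_minimal hφ hx).trans
    (exists_isEGen_closure_eq_iff_minimal hφ hwf).symm

end Generators

/-- `Q = C \ {y : x ∈ φ^b({y})}` is a quasi-closed set spanning `C`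
iff `C` is the closure of some E-generator of `x`. -/
theorem statement7 {α : Type*} [Fintype α] (φ : Set α → Set α)
    (hφ : IsClosureOp φ) (hstd : IsStandard φ)
    (C : Set α) (hC : IsClosedSet φ C) (x : α) (hx : x ∈ C) :
    (QuasiClosed φ (C \ {y : α | x ∈ binPart φ {y}}) ∧
        φ (C \ {y : α | x ∈ binPart φ {y}}) = C) ↔
      ∃ A : Set α, IsEGen φ x A ∧ φ A = C :=
  statement7_general hφ (InvImage.wf (binPart φ) wellFounded_lt) hx

end EBaseFormal
end

section
/- Let (U, φ) be a finite standard closure space and x ∈ U. For every closed set C of the form C = φ(B) with B an E-generator of x, there exist a pseudo-closed set P spanning C and an E-generator A of x such that A ⊆ P, x ∉ P, and φ(A) = φ(P) = C. -/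
namespace EBaseFormal

open Set

variable {α : Type*}

/-!
The elements `y` of `C` with `x ∉ φ {y}` form a set `Q` containing every E-generator of `x` that
spans `C`, so `Q` spans `C`. If `X ⊆ Q` spans a proper closed subset of `C`, then `x ∉ φ X`:
otherwise `X` would refine to a D-generator of `x`, against the minimality of `C`. Hence `φ X ⊆ Q`,
that is, `Q` is quasi-closed. A minimal quasi-closed spanning set `P ⊆ Q` of `C` is therefore
pseudo-closed and misses `x`. No single element of `P` spans `C`, so quasi-closedness makes `P`
stable under `φ^b`, and refining `P` itself to a D-generator of `x` does not leave `P`.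
-/

section

variable {φ : Set α → Set α} {x : α} {A B C Q X Y : Set α}

lemma IsClosureOp.subset_closure_s9 (hφ : IsClosureOp φ) (X : Set α) : X ⊆ φ X :=
  hφ.1 X

lemma IsClosureOp.closure_subset_of_subset (hφ : IsClosureOp φ) (h : X ⊆ φ Y) : φ X ⊆ φ Y :=
  (hφ.2.2 X (φ Y) h).trans_eq (hφ.2.1 Y)

lemma IsClosureOp.closure_singleton_subset (hφ : IsClosureOp φ) (hx : x ∈ φ X) :
    φ {x} ⊆ φ X :=
  hφ.closure_subset_of_subset (singleton_subset_iff.2 hx)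

lemma mem_binPart_iff : x ∈ binPart φ X ↔ ∃ y ∈ X, x ∈ φ {y} := by
  simp only [binPart, mem_iUnion, exists_prop]

lemma IsClosureOp.subset_binPart_s9 (hφ : IsClosureOp φ) (X : Set α) : X ⊆ binPart φ X :=
  fun y hy => mem_binPart_iff.2 ⟨y, hy, hφ.subset_closure_s9 {y} rfl⟩

lemma IsClosureOp.binPart_subset_closure_s9 (hφ : IsClosureOp φ) (X : Set α) :
    binPart φ X ⊆ φ X :=
  iUnion₂_subset fun _ hy => hφ.closure_singleton_subset (hφ.subset_closure_s9 X hy)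

lemma IsClosureOp.closure_subset_closure_of_binPart_subset (hφ : IsClosureOp φ)
    (h : binPart φ X ⊆ binPart φ Y) : φ X ⊆ φ Y :=
  hφ.closure_subset_of_subset <|
    (hφ.subset_binPart_s9 X).trans <| h.trans <| hφ.binPart_subset_closure_s9 Y

lemma QuasiClosed.binPart_subset (hQ : QuasiClosed φ Q) (hφ : IsClosureOp φ)
    (hne : ∀ y ∈ Q, φ {y} ≠ φ Q) : binPart φ Q ⊆ Q :=
  iUnion₂_subset fun y hy => hQ {y} (singleton_subset_iff.2 hy)
    ((hφ.closure_singleton_subset (hφ.subset_closure_s9 Q hy)).ssubset_of_ne (hne y hy))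

lemma QuasiClosed.exists_pseudoClosed_subset (hQ : QuasiClosed φ Q) (hφ : IsClosureOp φ)
    (hfin : Q.Finite) (hnc : ¬ IsClosedSet φ Q) :
    ∃ P ⊆ Q, PseudoClosed φ P ∧ φ P = φ Q := by
  let S : Set (Set α) := {P | P ⊆ Q ∧ QuasiClosed φ P ∧ φ P = φ Q}
  have hS : S.Finite := hfin.finite_subsets.subset fun _ hP => hP.1
  obtain ⟨P, ⟨hPQ, hP, hspan⟩, hmin⟩ := hS.exists_minimal ⟨Q, subset_rfl, hQ, rfl⟩
  have hPnc : ¬ IsClosedSet φ P := fun hcl =>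
    hnc (((hspan.symm.trans hcl).trans_subset hPQ).antisymm (hφ.subset_closure_s9 Q))
  refine ⟨P, hPQ, ⟨hPnc, hP, fun R hR hRP hsub => ?_⟩, hspan⟩
  exact hsub.antisymm (hmin ⟨hsub.trans hPQ, hR, hRP.trans hspan⟩ hsub)

lemma exists_isDGen_binPart_subset_s9 (hfin : (binPart φ Y).Finite) (hx : x ∈ φ Y)
    (hxb : x ∉ binPart φ Y) : ∃ A, IsDGen φ x A ∧ binPart φ A ⊆ binPart φ Y := by
  let S : Set (Set α) := {A | binPart φ A ⊆ binPart φ Y ∧ x ∈ φ A}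
  have hS : (binPart φ '' S).Finite :=
    hfin.finite_subsets.subset (image_subset_iff.2 fun _ hA => hA.1)
  obtain ⟨A, ⟨hAY, hxA⟩, hmin⟩ := hS.exists_minimalFor' _ _ ⟨Y, subset_rfl, hx⟩
  refine ⟨A, ⟨hxA, fun h => hxb (hAY h), fun B hBA hxB => ?_⟩, hAY⟩
  exact hBA.2 (hmin ⟨hBA.1.trans hAY, hxB⟩ hBA.1)

lemma IsEGen.of_isDGen (hB : IsEGen φ x B) (hA : IsDGen φ x A) (hAB : φ A ⊆ φ B) :
    IsEGen φ x A := by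
  have heq : φ A = φ B := hB.2 A hA hAB
  exact ⟨hA, fun D hD hDA => (hB.2 D hD (hDA.trans hAB)).trans heq.symm⟩

lemma IsEGen.exists_isEGen_binPart_subset (hB : IsEGen φ x B) (hφ : IsClosureOp φ)
    (hfin : (φ B).Finite) (hx : x ∈ φ Y) (hxb : x ∉ binPart φ Y) (hYB : φ Y ⊆ φ B) :
    ∃ A, IsEGen φ x A ∧ binPart φ A ⊆ binPart φ Y ∧ φ A = φ B := by
  have hYfin : (binPart φ Y).Finite := hfin.subset ((hφ.binPart_subset_closure_s9 Y).trans hYB)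
  obtain ⟨A, hA, hAY⟩ := exists_isDGen_binPart_subset_s9 hYfin hx hxb
  have hAB : φ A ⊆ φ B := (hφ.closure_subset_closure_of_binPart_subset hAY).trans hYB
  exact ⟨A, hB.of_isDGen hA hAB, hAY, hB.2 A hA hAB⟩

lemma IsEGen.closure_eq_of_subset (hB : IsEGen φ x B) (hφ : IsClosureOp φ)
    (hfin : (φ B).Finite) (hx : x ∈ φ Y) (hxb : x ∉ binPart φ Y) (hYB : φ Y ⊆ φ B) :
    φ Y = φ B := by
  obtain ⟨A, -, hAY, hAB⟩ := hB.exists_isEGen_binPart_subset hφ hfin hx hxb hYB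
  exact hYB.antisymm (hAB ▸ hφ.closure_subset_closure_of_binPart_subset hAY)

/-- The part of `C` lying outside the principal filter of `x` for the preorder `φ {x} ⊆ φ {y}`:
the largest subset of `C` whose binary part misses `x`. -/
def avoidingPart (φ : Set α → Set α) (x : α) (C : Set α) : Set α :=
  {y ∈ C | x ∉ φ {y}}

lemma avoidingPart_subset (φ : Set α → Set α) (x : α) (C : Set α) : avoidingPart φ x C ⊆ C :=
  sep_subset C _

lemma subset_avoidingPart_iff : X ⊆ avoidingPart φ x C ↔ X ⊆ C ∧ x ∉ binPart φ X := by
  simp only [avoidingPart, subset_def, mem_binPart_iff, mem_ofPred_eq, not_exists, not_and,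
    forall_and]

lemma IsClosureOp.notMem_avoidingPart (hφ : IsClosureOp φ) (x : α) (C : Set α) :
    x ∉ avoidingPart φ x C :=
  fun hx => hx.2 (hφ.subset_closure_s9 {x} rfl)

lemma IsClosureOp.closure_avoidingPart (hφ : IsClosureOp φ) (hxb : x ∉ binPart φ B) :
    φ (avoidingPart φ x (φ B)) = φ B := by
  have hB : B ⊆ avoidingPart φ x (φ B) :=
    subset_avoidingPart_iff.2 ⟨hφ.subset_closure_s9 B, hxb⟩
  exact (hφ.closure_subset_of_subset (avoidingPart_subset φ x _)).antisymm
    (hφ.closure_subset_of_subset (hB.trans (hφ.subset_closure_s9 _)))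

lemma IsEGen.quasiClosed_avoidingPart (hB : IsEGen φ x B) (hφ : IsClosureOp φ)
    (hfin : (φ B).Finite) : QuasiClosed φ (avoidingPart φ x (φ B)) := by
  intro X hX hlt
  rw [hφ.closure_avoidingPart hB.1.2.1] at hlt
  have hxX : x ∉ φ X := fun hx =>
    hlt.ne (hB.closure_eq_of_subset hφ hfin hx (subset_avoidingPart_iff.1 hX).2 hlt.subset)
  exact fun y hy => ⟨hlt.subset hy, fun hxy => hxX (hφ.closure_singleton_subset hy hxy)⟩

end

theorem statement9_general {φ : Set α → Set α} (hφ : IsClosureOp φ) {x : α} {B : Set α}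
    (hB : IsEGen φ x B) (hfin : (φ B).Finite) :
    ∃ P A : Set α, PseudoClosed φ P ∧ IsEGen φ x A ∧ A ⊆ P ∧ x ∉ P ∧ φ A = φ B ∧ φ P = φ B := by
  obtain ⟨hxB, hxb, -⟩ := hB.1
  have hQ : QuasiClosed φ (avoidingPart φ x (φ B)) := hB.quasiClosed_avoidingPart hφ hfin
  have hspan : φ (avoidingPart φ x (φ B)) = φ B := hφ.closure_avoidingPart hxb
  have hnc : ¬ IsClosedSet φ (avoidingPart φ x (φ B)) := fun hcl =>
    hφ.notMem_avoidingPart x _ ((hspan.symm.trans hcl).subset hxB)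
  obtain ⟨P, hPQ, hP, hPspan⟩ :=
    hQ.exists_pseudoClosed_subset hφ (hfin.subset (avoidingPart_subset φ x _)) hnc
  have hPB : φ P = φ B := hPspan.trans hspan
  have hxP : x ∈ φ P := hPB ▸ hxB
  have hxbP : x ∉ binPart φ P := (subset_avoidingPart_iff.1 hPQ).2
  have hstable : binPart φ P ⊆ P :=
    hP.2.1.binPart_subset hφ fun y hy heq => (hPQ hy).2 (heq ▸ hxP)
  obtain ⟨A, hA, hAP, hAB⟩ := hB.exists_isEGen_binPart_subset hφ hfin hxP hxbP hPB.subset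
  exact ⟨P, A, hP, hA, (hφ.subset_binPart_s9 A).trans (hAP.trans hstable),
    fun hx => hφ.notMem_avoidingPart x _ (hPQ hx), hAB, hPB⟩

/-- for every closed set `C` that is the closure of an E-generator of
`x`, there are a pseudo-closed set `P` spanning `C` and an E-generator `A` of `x`
with `A ⊆ P`, `x ∉ P` and `φ A = φ P = C`. -/
theorem statement9 {α : Type*} [Fintype α] (φ : Set α → Set α)
    (hφ : IsClosureOp φ) (hstd : IsStandard φ) (x : α) (B C : Set α)
    (hB : IsEGen φ x B) (hC : C = φ B) :
    ∃ P A : Set α, PseudoClosed φ P ∧ IsEGen φ x A ∧ A ⊆ P ∧ x ∉ P ∧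
      φ A = C ∧ φ P = C := by
  subst hC
  exact statement9_general hφ hB (toFinite _)

end EBaseFormal
end
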